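/- Under the hypotheses of the previous statement — f : ℝ^m → ℝ differentiable, μ-strongly convex with L-Lipschitz gradient (0 < μ ≤ L), minimizer φ*, random vector h with E[h] = ∇f(φ) and E[‖h‖²] ≤ ‖∇f(φ)‖² + σ² — if additionally the stepsize satisfies 0 < β ≤ 2/(μ+L), then E[‖φ − β·h − φ*‖²] ≤ (1 − (2μL/(μ+L))·β)·‖φ − φ*‖² + β²·σ², and the contraction factor satisfies 0 ≤ 1 − (2μL/(μ+L))·β < 1. -/

import Mathlib

open MeasureTheory
open scoped RealInnerProductSpace

/-!
For a `μ`-strongly convex `f` with `L`-Lipschitz gradient, the function `f - (μ/2)‖·‖²` is convex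
and bounded above by quadratics of curvature `L - μ`, so its gradient is cocoercive with constant
`L - μ`. In terms of `∇f` this reads
`‖∇f y - ∇f x‖² + μL‖y - x‖² ≤ (μ + L)⟪∇f y - ∇f x, y - x⟫`, which makes the exact gradient step
contract squared distances by the factor `1 - (2μL/(μ+L))β`. The stochastic step has the exact one
as its mean, and its variance `β²(E‖h‖² - ‖E h‖²)` is at most `β²σ²`.
-/

section QuadraticBounds

variable {E : Type*} [NormedAddCommGroup E] [InnerProductSpace ℝ E]

theorem norm_sub_sq_le_mul_inner_of_quadratic_bounds {K : ℝ} {f : E → ℝ} {g : E → E}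
    (hlower : ∀ x y, f x + ⟪g x, y - x⟫ ≤ f y)
    (hupper : ∀ x y, f y ≤ f x + ⟪g x, y - x⟫ + K / 2 * ‖y - x‖ ^ 2) (x y : E) :
    ‖g y - g x‖ ^ 2 ≤ K * ⟪g y - g x, y - x⟫ := by
  -- Compare the two bounds at the trial point `y - t • (g y - g x)`.
  have gap (x y : E) (t : ℝ) :
      f x - f y + ⟪g x, y - x⟫ + (t - K / 2 * t ^ 2) * ‖g y - g x‖ ^ 2 ≤ 0 := by
    have hl := hlower x (y - t • (g y - g x))
    have hu := hupper y (y - t • (g y - g x))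
    have hd : ⟪g y, g y - g x⟫ - ⟪g x, g y - g x⟫ = ‖g y - g x‖ ^ 2 := by
      rw [← inner_sub_left, real_inner_self_eq_norm_sq]
    rw [sub_right_comm, inner_sub_right, inner_smul_right] at hl
    rw [sub_sub_cancel_left, inner_neg_right, inner_smul_right, norm_neg, norm_smul, mul_pow,
      Real.norm_eq_abs, sq_abs] at hu
    linear_combination hl + hu - t * hd
  have quadratic_nonneg (t : ℝ) :
      0 ≤ K * ‖g y - g x‖ ^ 2 * (t * t) + -2 * ‖g y - g x‖ ^ 2 * t + ⟪g y - g x, y - x⟫ := by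
    have hyx := gap y x t
    rw [← neg_sub y x, inner_neg_right, norm_sub_rev] at hyx
    rw [inner_sub_left]
    linear_combination gap x y t + hyx
  -- Choosing `t = 1 / K` would also do, but not for `K = 0`, which occurs when `μ = L`.
  have hdiscrim := discrim_le_zero quadratic_nonneg
  rw [discrim] at hdiscrim
  rcases (sq_nonneg ‖g y - g x‖).eq_or_lt with hzero | hpos
  · have : g y - g x = 0 := by simpa using hzero.symm
    simp [this]
  · refine le_of_mul_le_mul_left ?_ hpos
    linear_combination hdiscrim / 4

theorem norm_sub_sq_add_le_mul_inner_of_quadratic_bounds {μ L : ℝ} {f : E → ℝ} {g : E → E}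
    (hlower : ∀ x y, f x + ⟪g x, y - x⟫ + μ / 2 * ‖y - x‖ ^ 2 ≤ f y)
    (hupper : ∀ x y, f y ≤ f x + ⟪g x, y - x⟫ + L / 2 * ‖y - x‖ ^ 2) (x y : E) :
    ‖g y - g x‖ ^ 2 + μ * L * ‖y - x‖ ^ 2 ≤ (μ + L) * ⟪g y - g x, y - x⟫ := by
  have norm_sq_expansion (x y : E) : ‖y‖ ^ 2 = ‖x‖ ^ 2 + 2 * ⟪x, y - x⟫ + ‖y - x‖ ^ 2 := by
    rw [← norm_add_sq_real, add_sub_cancel]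
  have cocoercive := norm_sub_sq_le_mul_inner_of_quadratic_bounds (K := L - μ)
    (f := fun z => f z - μ / 2 * ‖z‖ ^ 2) (g := fun z => g z - μ • z)
    (fun x y => by
      rw [inner_sub_left, real_inner_smul_left]
      linear_combination hlower x y + μ / 2 * norm_sq_expansion x y)
    (fun x y => by
      rw [inner_sub_left, real_inner_smul_left]
      linear_combination hupper x y - μ / 2 * norm_sq_expansion x y) x y
  have hshift : g y - μ • y - (g x - μ • x) = (g y - g x) - μ • (y - x) := by
    rw [smul_sub]; abel
  rw [hshift, norm_sub_sq_real, inner_sub_left _ (μ • _), real_inner_smul_left,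
    real_inner_smul_right, norm_smul, mul_pow, Real.norm_eq_abs, sq_abs,
    real_inner_self_eq_norm_sq] at cocoercive
  linear_combination cocoercive

theorem norm_sub_smul_sq_le_of_coercive {μ L β : ℝ} (hμL : 0 < μ + L) (hβ : 0 ≤ β)
    (hβle : β ≤ 2 / (μ + L)) {d e : E} (h : ‖d‖ ^ 2 + μ * L * ‖e‖ ^ 2 ≤ (μ + L) * ⟪d, e⟫) :
    ‖e - β • d‖ ^ 2 ≤ (1 - 2 * μ * L / (μ + L) * β) * ‖e‖ ^ 2 := by
  have hinner : (‖d‖ ^ 2 + μ * L * ‖e‖ ^ 2) / (μ + L) ≤ ⟪d, e⟫ := by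
    rwa [div_le_iff₀' hμL]
  calc ‖e - β • d‖ ^ 2 = ‖e‖ ^ 2 - 2 * β * ⟪d, e⟫ + β * β * ‖d‖ ^ 2 := by
        rw [norm_sub_sq_real, real_inner_smul_right, real_inner_comm, norm_smul, mul_pow,
          Real.norm_eq_abs, sq_abs]
        ring
    _ ≤ ‖e‖ ^ 2 - 2 * β * ((‖d‖ ^ 2 + μ * L * ‖e‖ ^ 2) / (μ + L))
          + β * (2 / (μ + L)) * ‖d‖ ^ 2 := by gcongr
    _ = (1 - 2 * μ * L / (μ + L) * β) * ‖e‖ ^ 2 := by ring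

end QuadraticBounds

section Gradient

variable {E : Type*} [NormedAddCommGroup E] [InnerProductSpace ℝ E] [CompleteSpace E]

theorem gradient_eq_zero_of_isLocalMin {f : E → ℝ} {x : E} (h : IsLocalMin f x) :
    gradient f x = 0 := by
  simp [gradient, h.fderiv_eq_zero]

theorem hasDerivAt_comp_add_smul {f : E → ℝ} {g x v : E} {t : ℝ}
    (hf : HasGradientAt f g (x + t • v)) :
    HasDerivAt (fun s : ℝ => f (x + s • v)) ⟪g, v⟫ t := by
  have hline : HasDerivAt (fun s : ℝ => x + s • v) v t := by
    simpa using ((hasDerivAt_id t).smul_const v).const_add x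
  exact (hf.hasFDerivAt.comp_hasDerivAt t hline).congr_deriv
    (InnerProductSpace.toDual_apply_apply ..)

theorem le_add_inner_add_of_norm_gradient_sub_le {L : ℝ} {f : E → ℝ} {g : E → E}
    (hf : ∀ z, HasGradientAt f (g z) z) {x : E} (hlip : ∀ z, ‖g z - g x‖ ≤ L * ‖z - x‖) (y : E) :
    f y ≤ f x + ⟪g x, y - x⟫ + L / 2 * ‖y - x‖ ^ 2 := by
  set v := y - x with hv
  have hasDeriv_f (t : ℝ) := hasDerivAt_comp_add_smul (hf (x + t • v))
  have hasDeriv_bound (t : ℝ) :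
      HasDerivAt (fun t : ℝ => f x + t * ⟪g x, v⟫ + L / 2 * ‖v‖ ^ 2 * t ^ 2)
        (⟪g x, v⟫ + L * t * ‖v‖ ^ 2) t := by
    refine ((((hasDerivAt_id t).mul_const ⟪g x, v⟫).const_add (f x)).add
      ((hasDerivAt_pow 2 t).const_mul (L / 2 * ‖v‖ ^ 2))).congr_deriv ?_
    push_cast
    ring
  have deriv_le (t : ℝ) (ht : 0 ≤ t) : ⟪g (x + t • v), v⟫ ≤ ⟪g x, v⟫ + L * t * ‖v‖ ^ 2 := by
    rw [← sub_le_iff_le_add', ← inner_sub_left]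
    calc ⟪g (x + t • v) - g x, v⟫ ≤ ‖g (x + t • v) - g x‖ * ‖v‖ := real_inner_le_norm _ _
      _ ≤ L * ‖x + t • v - x‖ * ‖v‖ := by gcongr; exact hlip _
      _ = L * t * ‖v‖ ^ 2 := by
        rw [add_sub_cancel_left, norm_smul, Real.norm_of_nonneg ht]
        ring
  have hle := image_le_of_deriv_right_le_deriv_boundary (a := 0) (b := 1)
    (fun t _ => (hasDeriv_f t).continuousAt.continuousWithinAt)
    (fun t _ => (hasDeriv_f t).hasDerivWithinAt) (by simp)
    (fun t _ => (hasDeriv_bound t).continuousAt.continuousWithinAt)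
    (fun t _ => (hasDeriv_bound t).hasDerivWithinAt) (fun t ht => deriv_le t ht.1)
    (Set.right_mem_Icc.2 zero_le_one)
  simpa [hv] using hle

theorem norm_gradient_step_sub_sq_le {μ L β : ℝ} {f : E → ℝ} (hμL : 0 < μ + L)
    (hf : Differentiable ℝ f)
    (hsc : ∀ x y, f x + ⟪gradient f x, y - x⟫ + μ / 2 * ‖y - x‖ ^ 2 ≤ f y)
    (hlip : ∀ x y, ‖gradient f x - gradient f y‖ ≤ L * ‖x - y‖)
    (hβ : 0 ≤ β) (hβle : β ≤ 2 / (μ + L)) (x y : E) :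
    ‖y - x - β • (gradient f y - gradient f x)‖ ^ 2 ≤
      (1 - 2 * μ * L / (μ + L) * β) * ‖y - x‖ ^ 2 :=
  norm_sub_smul_sq_le_of_coercive hμL hβ hβle <|
    norm_sub_sq_add_le_mul_inner_of_quadratic_bounds hsc
      (fun x => le_add_inner_add_of_norm_gradient_sub_le (fun z => (hf z).hasGradientAt)
        (fun z => hlip z x)) x y

end Gradient

theorem integral_norm_sub_sq_eq {E : Type*} [NormedAddCommGroup E] [InnerProductSpace ℝ E]
    [CompleteSpace E] {α : Type*} [MeasurableSpace α] {P : Measure α} [IsProbabilityMeasure P]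
    {h : α → E} (hh : MemLp h 2 P) (c : E) :
    ∫ a, ‖c - h a‖ ^ 2 ∂P =
      ‖c - ∫ a, h a ∂P‖ ^ 2 + (∫ a, ‖h a‖ ^ 2 ∂P - ‖∫ a, h a ∂P‖ ^ 2) := by
  have hint : Integrable h P := hh.integrable one_le_two
  have hinner : Integrable (fun a => 2 * ⟪c, h a⟫) P := (hint.const_inner c).const_mul 2
  have hdiff : Integrable (fun a => ‖c‖ ^ 2 - 2 * ⟪c, h a⟫) P := (integrable_const _).sub hinner
  have hsq : Integrable (fun a => ‖h a‖ ^ 2) P := hh.integrable_norm_pow two_ne_zero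
  simp_rw [norm_sub_sq_real]
  rw [integral_add hdiff hsq, integral_sub (integrable_const _) hinner, integral_const_mul,
    integral_inner hint, integral_const, probReal_univ, one_smul]
  ring

theorem contraction_factor_nonneg {μ L β : ℝ} (hμ : 0 ≤ μ) (hL : 0 ≤ L)
    (hβle : β ≤ 2 / (μ + L)) : 0 ≤ 1 - 2 * μ * L / (μ + L) * β := by
  rw [sub_nonneg]
  calc 2 * μ * L / (μ + L) * β ≤ 2 * μ * L / (μ + L) * (2 / (μ + L)) := by gcongr
    _ = 4 * μ * L / (μ + L) ^ 2 := by
      rw [div_mul_div_comm, ← sq]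
      congr 1
      ring
    _ ≤ 1 := div_le_one_of_le₀ (four_mul_le_sq_add μ L) (sq_nonneg _)

theorem sgd_one_step_contraction_general {E : Type*} [NormedAddCommGroup E]
    [InnerProductSpace ℝ E] [CompleteSpace E] {μ L : ℝ} (hμ : 0 < μ) (hL : 0 < L)
    {f : E → ℝ} (hf : Differentiable ℝ f)
    (hsc : ∀ x y, f x + ⟪gradient f x, y - x⟫ + μ / 2 * ‖y - x‖ ^ 2 ≤ f y)
    (hlip : ∀ x y, ‖gradient f x - gradient f y‖ ≤ L * ‖x - y‖)
    {φstar : E} (hmin : ∀ x, f φstar ≤ f x) {φ : E} {β : ℝ} (hβ : 0 < β)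
    (hβle : β ≤ 2 / (μ + L)) {α : Type*} [MeasurableSpace α] {P : Measure α}
    [IsProbabilityMeasure P] {h : α → E} (hh : MemLp h 2 P) {σ : ℝ}
    (hmean : ∫ a, h a ∂P = gradient f φ)
    (hsecond : ∫ a, ‖h a‖ ^ 2 ∂P ≤ ‖gradient f φ‖ ^ 2 + σ ^ 2) :
    (∫ a, ‖φ - β • h a - φstar‖ ^ 2 ∂P ≤
      (1 - (2 * μ * L / (μ + L)) * β) * ‖φ - φstar‖ ^ 2 + β ^ 2 * σ ^ 2) ∧
    0 ≤ 1 - (2 * μ * L / (μ + L)) * β ∧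
    1 - (2 * μ * L / (μ + L)) * β < 1 := by
  refine ⟨?_, contraction_factor_nonneg hμ.le hL.le hβle, sub_lt_self 1 (by positivity)⟩
  have hstep := norm_gradient_step_sub_sq_le (by positivity) hf hsc hlip hβ.le hβle φstar φ
  rw [gradient_eq_zero_of_isLocalMin (.of_forall hmin), sub_zero] at hstep
  calc ∫ a, ‖φ - β • h a - φstar‖ ^ 2 ∂P
    _ = ∫ a, ‖φ - φstar - (β • h) a‖ ^ 2 ∂P := by simp_rw [sub_right_comm, Pi.smul_apply]
    _ = ‖φ - φstar - β • gradient f φ‖ ^ 2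
          + β ^ 2 * (∫ a, ‖h a‖ ^ 2 ∂P - ‖gradient f φ‖ ^ 2) := by
        rw [integral_norm_sub_sq_eq (hh.const_smul β)]
        simp only [Pi.smul_apply, integral_smul, hmean, norm_smul, mul_pow, Real.norm_eq_abs,
          sq_abs, integral_const_mul, mul_sub]
    _ ≤ (1 - (2 * μ * L / (μ + L)) * β) * ‖φ - φstar‖ ^ 2 + β ^ 2 * σ ^ 2 := by
        gcongr
        exact sub_le_iff_le_add'.2 hsecond

/-- Under the hypotheses of the one-step stochastic gradient
bound, if additionally `0 < β ≤ 2/(μ+L)`, then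
`E[‖φ − βh − φ*‖²] ≤ (1 − (2μL/(μ+L))β)‖φ−φ*‖² + β²σ²`, and the contraction
factor satisfies `0 ≤ 1 − (2μL/(μ+L))β < 1`. -/
theorem sgd_one_step_contraction
    (m : ℕ) (μ L : ℝ) (hμ : 0 < μ) (hμL : μ ≤ L)
    (f : EuclideanSpace ℝ (Fin m) → ℝ) (hf : Differentiable ℝ f)
    (hsc : ∀ x y, f y ≥ f x + ⟪gradient f x, y - x⟫ + (μ / 2) * ‖y - x‖ ^ 2)
    (hlip : ∀ x y, ‖gradient f x - gradient f y‖ ≤ L * ‖x - y‖)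
    (φstar : EuclideanSpace ℝ (Fin m)) (hmin : ∀ x, f φstar ≤ f x)
    (φ : EuclideanSpace ℝ (Fin m)) (β : ℝ) (hβ : 0 < β) (hβle : β ≤ 2 / (μ + L))
    {α : Type*} [MeasurableSpace α] (P : Measure α) [IsProbabilityMeasure P]
    (h : α → EuclideanSpace ℝ (Fin m))
    (hh_int : Integrable h P)
    (hh_sq : Integrable (fun a => ‖h a‖ ^ 2) P)
    (σ : ℝ) (hσ : 0 ≤ σ)
    (hmean : ∫ a, h a ∂P = gradient f φ)
    (hsecond : ∫ a, ‖h a‖ ^ 2 ∂P ≤ ‖gradient f φ‖ ^ 2 + σ ^ 2) :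
    (∫ a, ‖φ - β • h a - φstar‖ ^ 2 ∂P ≤
      (1 - (2 * μ * L / (μ + L)) * β) * ‖φ - φstar‖ ^ 2 + β ^ 2 * σ ^ 2) ∧
    0 ≤ 1 - (2 * μ * L / (μ + L)) * β ∧
    1 - (2 * μ * L / (μ + L)) * β < 1 := by
  exact sgd_one_step_contraction_general hμ (hμ.trans_le hμL) hf hsc hlip hmin hβ hβle
    ((memLp_two_iff_integrable_sq_norm hh_int.1).2 hh_sq) hmean hsecond
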